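/- arXiv:math/0412255 — 3 statements merged into one kernel-verified Lean document; each statement's English description precedes it below -/
import Mathlib

section
/- Let H be a complex Hilbert space and D a bounded self-adjoint operator on H with ‖D‖ ≤ 1. Suppose there exist an integer n ≥ 2 and a real constant c < n such that for every ξ ∈ H one has Re⟪(1 − D^n)ξ, ξ⟫ ≤ c · Re⟪(1 − D)ξ, ξ⟫ (the Poincaré inequality E_n ≤ c·E). Then there exists κ < 1 such that every element z of the spectrum of D with z ≠ 1 satisfies Re z ≤ κ; in particular D has a spectral gap at 1. -/
open scoped InnerProductSpace

/-- Converse Poincaré inequality: if a self-adjoint contraction `D` satisfies, for some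
`n ≥ 2` and some constant `c < n`, the Poincaré inequality
`Re⟪(1 - Dⁿ)ξ, ξ⟫ ≤ c · Re⟪(1 - D)ξ, ξ⟫` for all `ξ`, then there is `κ < 1` bounding
`Re z` for every spectral value `z ≠ 1` of `D`: `D` has a spectral gap at `1`. -/
theorem spectral_gap_of_poincare_inequality
    {H : Type*} [NormedAddCommGroup H] [InnerProductSpace ℂ H] [CompleteSpace H]
    (D : H →L[ℂ] H) (hD : IsSelfAdjoint D) (hDnorm : ‖D‖ ≤ 1)
    (n : ℕ) (hn : 2 ≤ n) (c : ℝ) (hc : c < n)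
    (hpoin : ∀ ξ : H, (⟪(1 - D ^ n) ξ, ξ⟫_ℂ).re ≤ c * (⟪(1 - D) ξ, ξ⟫_ℂ).re) :
    ∃ κ : ℝ, κ < 1 ∧ ∀ z ∈ spectrum ℂ D, z ≠ 1 → z.re ≤ κ := by
  have hpos : (0 : H →L[ℂ] H) ≤ c • (1 - D) - (1 - D ^ n) := by
    rw [ContinuousLinearMap.nonneg_iff_isPositive, ContinuousLinearMap.isPositive_def']
    refine ⟨?_, fun ξ => ?_⟩
    · have h1 : IsSelfAdjoint (1 - D) := (IsSelfAdjoint.one _).sub hD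
      have h2 : IsSelfAdjoint (1 - D ^ n) := (IsSelfAdjoint.one _).sub (hD.pow n)
      exact (IsSelfAdjoint.smul (IsSelfAdjoint.all c) h1).sub h2
    · have h := hpoin ξ
      have e : c • (1 - D) = (c : ℂ) • (1 - D) := by
        ext x; simp
      rw [e, ContinuousLinearMap.reApplyInnerSelf_apply, ContinuousLinearMap.sub_apply,
        inner_sub_left, ContinuousLinearMap.smul_apply, inner_smul_left]
      simp only [Complex.conj_ofReal, RCLike.re_eq_complex_re, Complex.sub_re,
        Complex.re_ofReal_mul]
      linarith
  have key : ∀ x ∈ spectrum ℝ D, 1 - x ^ n ≤ c * (1 - x) := by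
    intro x hx
    have hmem := spectrum.subset_polynomial_aeval D
      (Polynomial.C c * (1 - Polynomial.X) - (1 - Polynomial.X ^ n) : Polynomial ℝ) ⟨x, hx, rfl⟩
    have e : Polynomial.aeval D
      (Polynomial.C c * (1 - Polynomial.X) - (1 - Polynomial.X ^ n) : Polynomial ℝ)
        = c • (1 - D) - (1 - D ^ n) := by
      simp [Algebra.smul_def]
    rw [e] at hmem
    have := spectrum_nonneg_of_nonneg hpos hmem
    simp at this
    linarith
  have hev : ∀ᶠ x : ℝ in nhds 1, c < ∑ i ∈ Finset.range n, x ^ i := by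
    have hcont : Continuous fun x : ℝ => ∑ i ∈ Finset.range n, x ^ i := by fun_prop
    exact hcont.continuousAt.eventually (lt_mem_nhds (by simpa using hc))
  obtain ⟨ε, hε, hball⟩ := Metric.eventually_nhds_iff.1 hev
  refine ⟨1 - ε, by linarith, fun z hz hz1 => ?_⟩
  by_contra! hlt
  have hzre : z = z.re := hD.mem_spectrum_eq_re hz
  have hx : z.re ∈ spectrum ℝ D := by
    rw [← spectrum.algebraMap_mem_iff ℂ]
    simpa [← hzre] using hz
  have hle : z.re ≤ 1 := by
    have hnt : Nontrivial (H →L[ℂ] H) := by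
      by_contra h
      rw [not_nontrivial_iff_subsingleton] at h
      rw [spectrum.of_subsingleton] at hz
      exact hz
    have hntH : Nontrivial H := by
      by_contra h
      rw [not_nontrivial_iff_subsingleton] at h
      exact not_subsingleton (H →L[ℂ] H) inferInstance
    exact (Complex.re_le_norm z).trans ((spectrum.norm_le_norm_of_mem hz).trans hDnorm)
  have hne : z.re ≠ 1 := fun h => hz1 (by rw [hzre, h]; simp)
  have hlt1 : z.re < 1 := lt_of_le_of_ne hle hne
  have h1 := hball (y := z.re) (by rw [Real.dist_eq, abs_lt]; constructor <;> linarith)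
  have h2 := key _ hx
  rw [← geom_sum_mul_neg] at h2
  have := le_of_mul_le_mul_right h2 (by linarith)
  linarith
end

section
/- Let H be a complex Hilbert space and let Δ and T be bounded self-adjoint operators on H which commute (Δ∘T = T∘Δ). Assume Δ is positive (Re⟪Δξ, ξ⟫ ≥ 0 for all ξ) and injective. Then the operator Δ∘T is positive (Re⟪ΔTξ, ξ⟫ ≥ 0 for all ξ) if and only if T is positive (Re⟪Tξ, ξ⟫ ≥ 0 for all ξ). -/
open scoped InnerProductSpace

/-- For commuting bounded self-adjoint operators `Δ` and `T` on a complex Hilbert space,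
with `Δ` positive and injective, the product `Δ ∘ T` is positive iff `T` is positive. -/
theorem comp_positive_iff_positive_of_commute
    {H : Type*} [NormedAddCommGroup H] [InnerProductSpace ℂ H] [CompleteSpace H]
    (Δ T : H →L[ℂ] H) (hΔ : IsSelfAdjoint Δ) (hT : IsSelfAdjoint T)
    (hcomm : Δ ∘L T = T ∘L Δ)
    (hΔpos : ∀ ξ : H, 0 ≤ (⟪Δ ξ, ξ⟫_ℂ).re)
    (hΔinj : Function.Injective Δ) :
    (∀ ξ : H, 0 ≤ (⟪Δ (T ξ), ξ⟫_ℂ).re) ↔ (∀ ξ : H, 0 ≤ (⟪T ξ, ξ⟫_ℂ).re) := by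
  have h0 : 0 ≤ Δ := by
    rw [ContinuousLinearMap.nonneg_iff_isPositive, ContinuousLinearMap.isPositive_def']
    exact ⟨hΔ, hΔpos⟩
  obtain ⟨S, hSsa, hSS, hST⟩ : ∃ S : H →L[ℂ] H, IsSelfAdjoint S ∧ S * S = Δ ∧ Commute S T :=
    ⟨CFC.sqrt Δ, (CFC.sqrt_nonneg Δ).isSelfAdjoint, CFC.sqrt_mul_sqrt_self Δ h0,
      Commute.cfcₙ_nnreal (show Commute Δ T from hcomm) _⟩
  have hS : ∀ x, S (S x) = Δ x := fun x => by rw [← hSS]; rfl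
  have hc : ∀ x, S (T x) = T (S x) := fun x => congrArg (fun f : H →L[ℂ] H => f x) hST.eq
  have hsym : ∀ x y, ⟪S x, y⟫_ℂ = ⟪x, S y⟫_ℂ := fun x y => hSsa.isSymmetric x y
  have key : ∀ ξ, ⟪Δ (T ξ), ξ⟫_ℂ = ⟪T (S ξ), S ξ⟫_ℂ := fun ξ => by
    rw [← hS, hsym, hc]
  simp only [key]
  refine ⟨fun h => ?_, fun h ξ => h _⟩
  have hd : DenseRange S := by
    have h1 : S.rangeᗮ = ⊥ := by
      rw [ContinuousLinearMap.orthogonal_range, hSsa.adjoint_eq, Submodule.eq_bot_iff]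
      intro x hx
      have hx' : S x = 0 := hx
      apply hΔinj
      rw [← hS, hx', map_zero, map_zero]
    have h2 := (Submodule.dense_iff_topologicalClosure_eq_top (s := S.range)).2
      (Submodule.topologicalClosure_eq_top_iff.2 h1)
    rwa [LinearMap.coe_range] at h2
  intro ξ
  refine hd.induction_on (p := fun ξ => 0 ≤ (⟪T ξ, ξ⟫_ℂ).re) ξ ?_ h
  exact isClosed_le continuous_const (by fun_prop)
end

section
/- Let (X, μ) be a probability space, p ≥ 1 a real number, η > 1 a real number, and f : X → [0, ∞) a measurable function such that ∫_X f^p dμ = 1 and ∫_{{f > η}} f^p dμ ≤ 1/2. Then μ({x : 1/η ≤ f(x) ≤ η}) ≥ (η^p − 2)/(2η^{2p} − 2). -/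
open MeasureTheory

/-- Quantitative mass bound: if `f ≥ 0`, `∫ f^p dμ = 1` and `∫_{f > η} f^p dμ ≤ 1/2`
(with `p ≥ 1`, `η > 1`, `μ` a probability measure), then
`μ{1/η ≤ f ≤ η} ≥ (η^p − 2)/(2η^{2p} − 2)`. -/
theorem measure_mem_Icc_ge_of_integral_rpow
    {X : Type*} [MeasurableSpace X] (μ : Measure X) [IsProbabilityMeasure μ]
    (p η : ℝ) (hp : 1 ≤ p) (hη : 1 < η)
    (f : X → ℝ) (hf : Measurable f) (hf0 : ∀ x, 0 ≤ f x)
    (hint : ∫ x, f x ^ p ∂μ = 1)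
    (htail : ∫ x in {x | η < f x}, f x ^ p ∂μ ≤ 1 / 2) :
    ENNReal.ofReal ((η ^ p - 2) / (2 * η ^ (2 * p) - 2))
      ≤ μ {x | 1 / η ≤ f x ∧ f x ≤ η} := by
  have hI : Integrable (fun x => f x ^ p) μ := by
    by_contra h
    rw [integral_undef h] at hint
    norm_num at hint
  have hη0 : 0 < η := by linarith
  have hp0 : 0 < p := by linarith
  set A : Set X := {x | 1 / η ≤ f x ∧ f x ≤ η} with hA
  set T : Set X := {x | η < f x} with hT
  have hAm : MeasurableSet A :=
    (measurableSet_le measurable_const hf).inter (measurableSet_le hf measurable_const)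
  have hTm : MeasurableSet T := measurableSet_lt measurable_const hf
  have ht : 1 < η ^ p := Real.one_lt_rpow hη hp0
  have ht2 : η ^ (2 * p) = (η ^ p) ^ 2 := by
    rw [two_mul, Real.rpow_add hη0, sq]
  have hinv : (1 / η) ^ p = (η ^ p)⁻¹ := by
    rw [one_div, Real.inv_rpow hη0.le]
  set t : ℝ := η ^ p with htdef
  have ht0 : 0 < t := by linarith
  have i1 : Integrable (A.indicator (fun _ => t)) μ := (integrable_const t).indicator hAm
  have i2 : Integrable (T.indicator (fun x => f x ^ p)) μ := hI.indicator hTm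
  have i3 : Integrable (Aᶜ.indicator (fun _ => t⁻¹)) μ :=
    (integrable_const t⁻¹).indicator hAm.compl
  have key : ∫ x, f x ^ p ∂μ ≤ ∫ x, (A.indicator (fun _ => t) x
      + T.indicator (fun x => f x ^ p) x + Aᶜ.indicator (fun _ => t⁻¹) x) ∂μ := by
    refine integral_mono hI ((i1.add i2).add i3) ?_
    intro x
    have hnn : 0 ≤ f x ^ p := Real.rpow_nonneg (hf0 x) p
    have hti : 0 < t⁻¹ := inv_pos.mpr ht0
    have hTn : 0 ≤ T.indicator (fun x => f x ^ p) x :=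
      Set.indicator_nonneg (fun y _ => Real.rpow_nonneg (hf0 y) p) x
    by_cases hxA : x ∈ A
    · have h1 : f x ^ p ≤ t := Real.rpow_le_rpow (hf0 x) hxA.2 hp0.le
      have h2 : x ∉ Aᶜ := fun h => h hxA
      simp only [Set.indicator_of_mem hxA, Set.indicator_of_notMem h2]
      linarith
    · have h2 : x ∈ Aᶜ := hxA
      simp only [Set.indicator_of_notMem hxA, Set.indicator_of_mem h2]
      by_cases hxT : x ∈ T
      · simp only [Set.indicator_of_mem hxT]
        linarith
      · have h3 : f x ≤ 1 / η := by
          by_contra h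
          exact hxA ⟨(not_le.mp h).le, not_lt.mp hxT⟩
        have h4 : f x ^ p ≤ t⁻¹ := hinv ▸ Real.rpow_le_rpow (hf0 x) h3 hp0.le
        linarith
  have i12 : Integrable (fun x => A.indicator (fun _ => t) x
      + T.indicator (fun x => f x ^ p) x) μ := i1.add i2
  rw [integral_add i12 i3, integral_add i1 i2, integral_indicator hAm,
    integral_indicator hTm, integral_indicator hAm.compl, setIntegral_const,
    setIntegral_const, hint, probReal_compl_eq_one_sub hAm, smul_eq_mul, smul_eq_mul] at key
  have hfin : (t - 2) / (2 * t ^ 2 - 2) ≤ μ.real A := by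
    have hd : 0 < 2 * t ^ 2 - 2 := by nlinarith
    rw [div_le_iff₀ hd]
    have h5 : 1 ≤ μ.real A * t + 1 / 2 + (1 - μ.real A) * t⁻¹ := by linarith
    have h6 := mul_le_mul_of_nonneg_right h5 ht0.le
    have h7 : (μ.real A * t + 1 / 2 + (1 - μ.real A) * t⁻¹) * t
        = μ.real A * t ^ 2 + t / 2 + (1 - μ.real A) := by
      field_simp
    rw [h7] at h6
    linarith
  rw [ht2]
  exact ENNReal.ofReal_le_of_le_toReal hfin
end
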